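/- arXiv:1805.05935 — 2 statements merged into one kernel-verified Lean document; each statement's English description precedes it below -/
import Mathlib

section
/- Let μ be a stationary deterministic policy, V ∈ F, and h ≥ 1 an integer, and assume A′_h < ∞. Then ‖T_μ^h V − V^μ‖_{1,ρ1} ≤ γ^h A′_h ‖V − V^μ‖_{1,ρ0}. -/
open MeasureTheory
open scoped ENNReal

/-- Bellman operator for a fixed policy `π`:
`(T_π V)(s) = r(s, π s) + γ ∫ V ds' p(ds'|s, π s)`. -/
noncomputable def Tpol {S : Type*} [MeasurableSpace S] {A : Type*}
    (p : S → A → Measure S) (r : S → A → ℝ) (γ : ℝ) (π : S → A)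
    (V : S → ℝ) : S → ℝ :=
  fun s => r s (π s) + γ * ∫ s', V s' ∂(p s (π s))

/-- Bellman optimality operator:
`(T V)(s) = max_{a ∈ A} [ r(s,a) + γ ∫ V ds' p(ds'|s,a) ]`. -/
noncomputable def Tbell {S : Type*} [MeasurableSpace S] {A : Type*}
    (p : S → A → Measure S) (r : S → A → ℝ) (γ : ℝ)
    (V : S → ℝ) : S → ℝ :=
  fun s => ⨆ a : A, (r s a + γ * ∫ s', V s' ∂(p s a))

/-- Right action of a policy's transition operator on measures: `ν P_π`. -/
noncomputable def Pmeas {S : Type*} [MeasurableSpace S] {A : Type*}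
    (p : S → A → Measure S) (π : S → A) (ν : Measure S) : Measure S :=
  ν.bind fun s => p s (π s)

/-- Left action of a policy's transition operator on functions:
`(P_π V)(s) = ∫ V ds' p(ds'|s, π s)`. -/
noncomputable def Pfun {S : Type*} [MeasurableSpace S] {A : Type*}
    (p : S → A → Measure S) (π : S → A) (V : S → ℝ) : S → ℝ :=
  fun s => ∫ s', V s' ∂(p s (π s))

/-- `‖f‖_{1,μ} = ∫ |f| dμ`. -/
noncomputable def L1 {S : Type*} [MeasurableSpace S] (f : S → ℝ) (μ : Measure S) : ℝ :=
  ∫ s, |f s| ∂μ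

/-- Supremum norm `‖f‖_∞`. -/
noncomputable def supNorm {S : Type*} (f : S → ℝ) : ℝ := ⨆ s, |f s|

/-- The measure `ρ P_{μ_1} P_{μ_2} ⋯ P_{μ_m}` obtained by applying the transition
operators of a list of policies in succession, starting from `ρ`. -/
noncomputable def pushPol {S : Type*} [MeasurableSpace S] {A : Type*}
    (p : S → A → Measure S) (ρ : Measure S) (μs : List (S → A)) : Measure S :=
  μs.foldl (fun ν π => Pmeas p π ν) ρ

/-- The `m`-step concentrability coefficient: the supremum over all sequences of `m`
measurable policies of the essential supremum of the Radon–Nikodym derivative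
`d(base P_{μ_1} ⋯ P_{μ_m}) / d(ref)`.  (For `m = 0` it is `ess sup d(base)/d(ref)`.) -/
noncomputable def Aconc {S : Type*} [MeasurableSpace S] {A : Type*} [MeasurableSpace A]
    (p : S → A → Measure S) (base ref : Measure S) (m : ℕ) : ℝ≥0∞ :=
  ⨆ μs : Fin m → {π : S → A // Measurable π},
    essSup ((pushPol p base (List.ofFn fun i => (μs i).1)).rnDeriv ref) ref

/-- The unnormalized measure `Λ = ν (P_{πs})^m ∑_{j=0}^∞ γ^j (P_{πn})^j`, i.e. `ν`
pushed `m` times through `P_{πs}` and then through the Neumann series for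
`[I - γ P_{πn}]⁻¹`. -/
noncomputable def Lam {S : Type*} [MeasurableSpace S] {A : Type*}
    (p : S → A → Measure S) (γ : ℝ) (ν : Measure S) (πs πn : S → A) (m : ℕ) : Measure S :=
  Measure.sum fun j : ℕ =>
    ENNReal.ofReal (γ ^ j) • (fun μ => Pmeas p πn μ)^[j] ((fun μ => Pmeas p πs μ)^[m] ν)

/-- One step of the Bellman operator contracts towards the fixed point. -/
theorem aux_step {S : Type*} [MeasurableSpace S] {A : Type*}
    (p : S → A → Measure S) (r : S → A → ℝ) (γ : ℝ)
    (hp : ∀ s a, IsProbabilityMeasure (p s a)) (μ : S → A)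
    (Vμ : S → ℝ) (hVμm : Measurable Vμ) (hVμb : ∃ C, ∀ s, |Vμ s| ≤ C)
    (hVμfix : Tpol p r γ μ Vμ = Vμ)
    (W : S → ℝ) (hWm : Measurable W) (hWb : ∃ C, ∀ s, |W s| ≤ C) (s : S) :
    Tpol p r γ μ W s - Vμ s = γ * ∫ s', (W s' - Vμ s') ∂(p s (μ s)) := by
  have := hp s (μ s)
  obtain ⟨C, hC⟩ := hVμb
  obtain ⟨D, hD⟩ := hWb
  have i1 : Integrable W (p s (μ s)) :=
    Integrable.of_bound hWm.aestronglyMeasurable D (Filter.Eventually.of_forall hD)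
  have i2 : Integrable Vμ (p s (μ s)) :=
    Integrable.of_bound hVμm.aestronglyMeasurable C (Filter.Eventually.of_forall hC)
  rw [integral_sub i1 i2]
  have e := congrFun hVμfix s
  unfold Tpol at e ⊢
  linarith

theorem aux_inv {S : Type*} [MeasurableSpace S] {A : Type*}
    (p : S → A → Measure S) (r : S → A → ℝ) (γ : ℝ)
    (hp : ∀ s a, IsProbabilityMeasure (p s a)) (μ : S → A)
    (hκ : Measurable fun s => p s (μ s))
    (Vμ : S → ℝ) (hVμm : Measurable Vμ) (hVμb : ∃ C, ∀ s, |Vμ s| ≤ C)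
    (hVμfix : Tpol p r γ μ Vμ = Vμ)
    (W : S → ℝ) (hWm : Measurable W) (hWb : ∃ C, ∀ s, |W s| ≤ C) :
    Measurable (Tpol p r γ μ W) ∧ ∃ C, ∀ s, |Tpol p r γ μ W s| ≤ C := by
  have e : Tpol p r γ μ W = fun s => Vμ s + γ * ∫ s', (W s' - Vμ s') ∂(p s (μ s)) := by
    funext s
    have := aux_step p r γ hp μ Vμ hVμm hVμb hVμfix W hWm hWb s
    linarith
  rw [e]
  constructor
  · let κ : ProbabilityTheory.Kernel S S := ⟨fun s => p s (μ s), hκ⟩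
    have : ProbabilityTheory.IsMarkovKernel κ := ⟨fun s => hp s (μ s)⟩
    have hm : Measurable fun s => ∫ s', (W s' - Vμ s') ∂(κ s) :=
      ((hWm.sub hVμm).stronglyMeasurable.integral_kernel (κ := κ)).measurable
    exact hVμm.add (hm.const_mul γ)
  · obtain ⟨C, hC⟩ := hVμb
    obtain ⟨D, hD⟩ := hWb
    refine ⟨C + |γ| * (D + C), fun s => ?_⟩
    have := hp s (μ s)
    have hb : ‖∫ s', (W s' - Vμ s') ∂(p s (μ s))‖ ≤ (D + C) * (p s (μ s)).real Set.univ :=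
      norm_integral_le_of_norm_le_const (Filter.Eventually.of_forall fun s' =>
        (abs_sub _ _).trans (add_le_add (hD s') (hC s')))
    rw [probReal_univ, mul_one, Real.norm_eq_abs] at hb
    refine (abs_add_le _ _).trans (add_le_add (hC s) ?_)
    rw [abs_mul]
    exact mul_le_mul_of_nonneg_left hb (abs_nonneg _)

theorem aux_iter {S : Type*} [MeasurableSpace S] {A : Type*}
    (p : S → A → Measure S) (r : S → A → ℝ) (γ : ℝ)
    (hp : ∀ s a, IsProbabilityMeasure (p s a)) (μ : S → A)
    (hκ : Measurable fun s => p s (μ s))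
    (Vμ : S → ℝ) (hVμm : Measurable Vμ) (hVμb : ∃ C, ∀ s, |Vμ s| ≤ C)
    (hVμfix : Tpol p r γ μ Vμ = Vμ)
    (W : S → ℝ) (hWm : Measurable W) (hWb : ∃ C, ∀ s, |W s| ≤ C) (n : ℕ) :
    Measurable ((Tpol p r γ μ)^[n] W) ∧ ∃ C, ∀ s, |(Tpol p r γ μ)^[n] W s| ≤ C := by
  induction n with
  | zero => exact ⟨hWm, hWb⟩
  | succ n ih =>
    rw [Function.iterate_succ_apply']
    exact aux_inv p r γ hp μ hκ Vμ hVμm hVμb hVμfix _ ih.1 ih.2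

theorem aux_bound {S : Type*} [MeasurableSpace S] {A : Type*}
    (p : S → A → Measure S) (r : S → A → ℝ) (γ : ℝ)
    (hp : ∀ s a, IsProbabilityMeasure (p s a)) (μ : S → A)
    (hκ : Measurable fun s => p s (μ s))
    (Vμ : S → ℝ) (hVμm : Measurable Vμ) (hVμb : ∃ C, ∀ s, |Vμ s| ≤ C)
    (hVμfix : Tpol p r γ μ Vμ = Vμ)
    (W : S → ℝ) (hWm : Measurable W) (hWb : ∃ C, ∀ s, |W s| ≤ C) (n : ℕ) (ν : Measure S) :
    ∫⁻ s, ‖(Tpol p r γ μ)^[n] W s - Vμ s‖ₑ ∂ν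
      ≤ ‖γ‖ₑ ^ n * ∫⁻ s, ‖W s - Vμ s‖ₑ ∂(pushPol p ν (List.replicate n μ)) := by
  induction n generalizing ν with
  | zero => simp [pushPol]
  | succ n ih =>
    obtain ⟨hm, hb⟩ := aux_iter p r γ hp μ hκ Vμ hVμm hVμb hVμfix W hWm hWb n
    have hmd : Measurable fun s => (Tpol p r γ μ)^[n] W s - Vμ s := hm.sub hVμm
    simp only [Function.iterate_succ_apply']
    calc ∫⁻ s, ‖Tpol p r γ μ ((Tpol p r γ μ)^[n] W) s - Vμ s‖ₑ ∂ν
        ≤ ∫⁻ s, ‖γ‖ₑ * ∫⁻ s', ‖(Tpol p r γ μ)^[n] W s' - Vμ s'‖ₑ ∂(p s (μ s)) ∂ν := by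
          refine lintegral_mono fun s => ?_
          rw [aux_step p r γ hp μ Vμ hVμm hVμb hVμfix _ hm hb s, enorm_mul]
          gcongr
          exact enorm_integral_le_lintegral_enorm _
      _ = ‖γ‖ₑ * ∫⁻ s', ‖(Tpol p r γ μ)^[n] W s' - Vμ s'‖ₑ ∂(Pmeas p μ ν) := by
          rw [lintegral_const_mul' _ _ enorm_ne_top, Pmeas,
            Measure.lintegral_bind hκ.aemeasurable hmd.enorm.aemeasurable]
      _ ≤ ‖γ‖ₑ * (‖γ‖ₑ ^ n *
            ∫⁻ s, ‖W s - Vμ s‖ₑ ∂(pushPol p (Pmeas p μ ν) (List.replicate n μ))) := by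
          gcongr
          exact ih _
      _ = _ := by
          rw [pow_succ', mul_assoc]
          rfl

theorem aux_prob {S : Type*} [MeasurableSpace S] {A : Type*}
    (p : S → A → Measure S)
    (hp : ∀ s a, IsProbabilityMeasure (p s a)) (μ : S → A)
    (hκ : Measurable fun s => p s (μ s)) (n : ℕ) (ν : Measure S) (hν : IsProbabilityMeasure ν) :
    IsProbabilityMeasure (pushPol p ν (List.replicate n μ)) := by
  induction n generalizing ν with
  | zero => simpa [pushPol] using hν
  | succ n ih =>
    exact ih (Pmeas p μ ν)
      (isProbabilityMeasure_bind hκ.aemeasurable (Filter.Eventually.of_forall fun s => hp s (μ s)))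

theorem policy_h_step_evaluation_error
    {S : Type*} [MeasurableSpace S] {A : Type*} [MeasurableSpace A] [Fintype A] [Nonempty A]
    (p : S → A → Measure S) (r : S → A → ℝ) (γ Rmax : ℝ)
    (hp : ∀ s a, IsProbabilityMeasure (p s a))
    (hpm : Measurable (Function.uncurry p))
    (hr : ∀ s a, r s a ∈ Set.Icc (0 : ℝ) Rmax)
    (hγ : γ ∈ Set.Ico (0 : ℝ) 1)
    (ρ0 ρ1 : Measure S) [IsProbabilityMeasure ρ0] [IsProbabilityMeasure ρ1]
    (habs : ∀ μs : List (S → A), (∀ π ∈ μs, Measurable π) → pushPol p ρ1 μs ≪ ρ0)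
    (μ : S → A) (hμ : Measurable μ)
    (V : S → ℝ) (hVm : Measurable V) (hVb : ∀ s, V s ∈ Set.Icc (0 : ℝ) (Rmax / (1 - γ)))
    (Vμ : S → ℝ) (hVμm : Measurable Vμ)
    (hVμb : ∀ s, Vμ s ∈ Set.Icc (0 : ℝ) (Rmax / (1 - γ)))
    (hVμfix : Tpol p r γ μ Vμ = Vμ)
    (h : ℕ) (hh : 1 ≤ h)
    (hA : Aconc p ρ1 ρ0 h ≠ ⊤) :
    L1 (fun s => (Tpol p r γ μ)^[h] V s - Vμ s) ρ1
      ≤ γ ^ h * (Aconc p ρ1 ρ0 h).toReal * L1 (fun s => V s - Vμ s) ρ0 := by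
  have hκ : Measurable fun s => p s (μ s) := hpm.comp (measurable_id.prodMk hμ)
  have bd : ∀ U : S → ℝ, (∀ s, U s ∈ Set.Icc (0 : ℝ) (Rmax / (1 - γ))) → ∃ C, ∀ s, |U s| ≤ C :=
    fun U hU => ⟨Rmax / (1 - γ), fun s => by rw [abs_of_nonneg (hU s).1]; exact (hU s).2⟩
  have hb := aux_bound p r γ hp μ hκ Vμ hVμm (bd _ hVμb) hVμfix V hVm (bd _ hVb) h ρ1
  have hit := aux_iter p r γ hp μ hκ Vμ hVμm (bd _ hVμb) hVμfix V hVm (bd _ hVb) h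
  have hprob := aux_prob p hp μ hκ h ρ1 inferInstance
  have hac := habs (List.replicate h μ) (fun π hπ => by rw [List.eq_of_mem_replicate hπ]; exact hμ)
  set ν := pushPol p ρ1 (List.replicate h μ) with hν
  have hVd : Measurable fun s => V s - Vμ s := hVm.sub hVμm
  have hTd : Measurable fun s => (Tpol p r γ μ)^[h] V s - Vμ s := hit.1.sub hVμm
  have hess : essSup (ν.rnDeriv ρ0) ρ0 ≤ Aconc p ρ1 ρ0 h := by
    have := le_iSup (fun μs : Fin h → {π : S → A // Measurable π} =>
      essSup ((pushPol p ρ1 (List.ofFn fun i => (μs i).1)).rnDeriv ρ0) ρ0) (fun _ => ⟨μ, hμ⟩)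
    simp only [List.ofFn_const] at this
    exact this
  have hdens : ∫⁻ s, ‖V s - Vμ s‖ₑ ∂ν ≤ Aconc p ρ1 ρ0 h * ∫⁻ s, ‖V s - Vμ s‖ₑ ∂ρ0 := by
    rw [← lintegral_rnDeriv_mul hac hVd.enorm.aemeasurable,
      ← lintegral_const_mul' _ _ hA]
    refine lintegral_mono_ae ?_
    filter_upwards [ENNReal.ae_le_essSup (μ := ρ0) (ν.rnDeriv ρ0)] with s hs
    gcongr
    exact hs.trans hess
  have hfin : ∫⁻ s, ‖V s - Vμ s‖ₑ ∂ρ0 ≠ ⊤ := by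
    have : Integrable (fun s => V s - Vμ s) ρ0 := by
      obtain ⟨C, hC⟩ := bd _ hVb
      obtain ⟨D, hD⟩ := bd _ hVμb
      exact (Integrable.of_bound hVm.aestronglyMeasurable C (Filter.Eventually.of_forall hC)).sub
        (Integrable.of_bound hVμm.aestronglyMeasurable D (Filter.Eventually.of_forall hD))
    exact this.2.ne
  have hL : ∀ (f : S → ℝ) (m : Measure S), Measurable f →
      L1 f m = (∫⁻ s, ‖f s‖ₑ ∂m).toReal := fun f m hf =>
    integral_norm_eq_lintegral_enorm hf.aestronglyMeasurable
  rw [hL _ _ hTd, hL _ _ hVd]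
  have hγe : (‖γ‖ₑ).toReal = γ := by
    rw [toReal_enorm, Real.norm_eq_abs, abs_of_nonneg hγ.1]
  have key := hb.trans (mul_le_mul_right hdens (‖γ‖ₑ ^ h))
  have := ENNReal.toReal_mono
    (ENNReal.mul_ne_top (ENNReal.pow_ne_top enorm_ne_top) (ENNReal.mul_ne_top hA hfin)) key
  rw [ENNReal.toReal_mul, ENNReal.toReal_mul, ENNReal.toReal_pow, hγe, ← mul_assoc] at this
  exact this
end

section
/- Let ν be a probability distribution on S, m ≥ 0 an integer, μ a stationary deterministic policy, and f a bounded measurable function on S. Suppose A_i < ∞ for all i ≥ 0 and Σ_{j=0}^∞ γ^j A_{m+j} < ∞. Then ∫ |f| dΛ ≤ (Σ_{j=0}^∞ γ^j A_{m+j}) ‖f‖_{1,ρ1}, where Λ = ν (P_{π^*})^m Σ_{j=0}^∞ γ^j (P_μ)^j is the unnormalized measure obtained by applying to ν the transition operator of the optimal policy m times followed by the Neumann series for [I − γ P_μ]^{−1}. -/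
open MeasureTheory
open scoped ENNReal

theorem pushPol_isProb {S : Type*} [MeasurableSpace S] {A : Type*} [MeasurableSpace A]
    (p : S → A → Measure S) (hp : ∀ s a, IsProbabilityMeasure (p s a))
    (hpm : Measurable (Function.uncurry p)) (l : List (S → A)) :
    ∀ (ν : Measure S), IsProbabilityMeasure ν → (∀ π ∈ l, Measurable π) →
      IsProbabilityMeasure (pushPol p ν l) := by
  induction l with
  | nil => intro ν hν _; exact hν
  | cons π l ih =>
    intro ν hν hl
    have hπ : Measurable π := hl π (by simp)
    have hm : Measurable fun s => p s (π s) := hpm.comp (measurable_id.prodMk hπ)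
    refine ih (Pmeas p π ν) ⟨?_⟩ (fun q hq => hl q (by simp [hq]))
    have h1 : ∀ s, p s (π s) Set.univ = 1 := fun s => (hp s (π s)).measure_univ
    unfold Pmeas
    rw [Measure.bind_apply MeasurableSet.univ hm.aemeasurable]
    simp [h1]

theorem pushPol_replicate {S : Type*} [MeasurableSpace S] {A : Type*}
    (p : S → A → Measure S) (π : S → A) (m : ℕ) : ∀ (ν : Measure S),
    pushPol p ν (List.replicate m π) = (fun μ => Pmeas p π μ)^[m] ν := by
  induction m with
  | zero => intro ν; rfl
  | succ n ih => intro ν; exact ih (Pmeas p π ν)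

theorem pushPol_append {S : Type*} [MeasurableSpace S] {A : Type*}
    (p : S → A → Measure S) (ν : Measure S) (l l' : List (S → A)) :
    pushPol p ν (l ++ l') = pushPol p (pushPol p ν l) l' := by
  simp [pushPol, List.foldl_append]

theorem pushPol_le {S : Type*} [MeasurableSpace S] {A : Type*} [MeasurableSpace A]
    (p : S → A → Measure S) (hp : ∀ s a, IsProbabilityMeasure (p s a))
    (hpm : Measurable (Function.uncurry p))
    (ρ1 : Measure S) [IsProbabilityMeasure ρ1]
    (ν : Measure S) [IsProbabilityMeasure ν]
    (habs : ∀ μs : List (S → A), (∀ π ∈ μs, Measurable π) → pushPol p ν μs ≪ ρ1)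
    (l : List (S → A)) (hl : ∀ π ∈ l, Measurable π) :
    pushPol p ν l ≤ Aconc p ν ρ1 l.length • ρ1 := by
  have := pushPol_isProb p hp hpm l ν inferInstance hl
  have hess : essSup ((pushPol p ν l).rnDeriv ρ1) ρ1 ≤ Aconc p ν ρ1 l.length := by
    have h := le_iSup (fun μs : Fin l.length → {π : S → A // Measurable π} =>
      essSup ((pushPol p ν (List.ofFn fun i => (μs i).1)).rnDeriv ρ1) ρ1)
      (fun i => ⟨l.get i, hl _ (List.get_mem l i)⟩)
    simpa [Aconc] using h
  rw [← Measure.withDensity_rnDeriv_eq _ _ (habs l hl), ← withDensity_const]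
  refine withDensity_mono ?_
  filter_upwards [ENNReal.ae_le_essSup ((pushPol p ν l).rnDeriv ρ1)] with s hs
  exact hs.trans hess

theorem neumann_measure_bound
    {S : Type*} [MeasurableSpace S] {A : Type*} [MeasurableSpace A] [Fintype A] [Nonempty A]
    (p : S → A → Measure S) (r : S → A → ℝ) (γ Rmax : ℝ)
    (hp : ∀ s a, IsProbabilityMeasure (p s a))
    (hpm : Measurable (Function.uncurry p))
    (hr : ∀ s a, r s a ∈ Set.Icc (0 : ℝ) Rmax)
    (hγ : γ ∈ Set.Ico (0 : ℝ) 1)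
    (Vstar : S → ℝ) (hVstarm : Measurable Vstar)
    (hVstarfix : Tbell p r γ Vstar = Vstar)
    (πstar : S → A) (hπstar : Measurable πstar)
    (hgreedy : Tpol p r γ πstar Vstar = Vstar)
    (ρ1 : Measure S) [IsProbabilityMeasure ρ1]
    (ν : Measure S) [IsProbabilityMeasure ν]
    (habs : ∀ μs : List (S → A), (∀ π ∈ μs, Measurable π) → pushPol p ν μs ≪ ρ1)
    (m : ℕ) (μ : S → A) (hμ : Measurable μ)
    (f : S → ℝ) (hfm : Measurable f) (C : ℝ) (hfb : ∀ s, |f s| ≤ C)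
    (hAfin : ∀ i : ℕ, Aconc p ν ρ1 i ≠ ⊤)
    (hsum : Summable fun j : ℕ => γ ^ j * (Aconc p ν ρ1 (m + j)).toReal) :
    ∫ s, |f s| ∂(Lam p γ ν πstar μ m)
      ≤ (∑' j : ℕ, γ ^ j * (Aconc p ν ρ1 (m + j)).toReal) * L1 f ρ1 := by
  have key : ∀ j : ℕ, ∫⁻ s, ENNReal.ofReal |f s|
      ∂((fun μ' => Pmeas p μ μ')^[j] ((fun μ' => Pmeas p πstar μ')^[m] ν))
      ≤ Aconc p ν ρ1 (m + j) * ∫⁻ s, ENNReal.ofReal |f s| ∂ρ1 := by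
    intro j
    have h := pushPol_le p hp hpm ρ1 ν habs (List.replicate m πstar ++ List.replicate j μ) (by
      intro π hπ
      rw [List.mem_append] at hπ
      rcases hπ with h | h
      · rw [List.eq_of_mem_replicate h]; exact hπstar
      · rw [List.eq_of_mem_replicate h]; exact hμ)
    rw [pushPol_append, pushPol_replicate, pushPol_replicate] at h
    simp only [List.length_append, List.length_replicate] at h
    calc _ ≤ _ := lintegral_mono' h le_rfl
      _ = _ := by rw [lintegral_smul_measure, smul_eq_mul]
  have hpow : ∀ j : ℕ, 0 ≤ γ ^ j := fun j => pow_nonneg hγ.1 j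
  have hnn : ∀ j : ℕ, 0 ≤ γ ^ j * (Aconc p ν ρ1 (m + j)).toReal := fun j =>
    mul_nonneg (hpow j) ENNReal.toReal_nonneg
  have hL : ∫⁻ s, ENNReal.ofReal |f s| ∂(Lam p γ ν πstar μ m)
      ≤ ENNReal.ofReal (∑' j : ℕ, γ ^ j * (Aconc p ν ρ1 (m + j)).toReal)
        * ∫⁻ s, ENNReal.ofReal |f s| ∂ρ1 := by
    unfold Lam
    rw [lintegral_sum_measure, ENNReal.ofReal_tsum_of_nonneg hnn hsum, ← ENNReal.tsum_mul_right]
    refine ENNReal.tsum_le_tsum fun j => ?_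
    rw [lintegral_smul_measure, smul_eq_mul, ENNReal.ofReal_mul (hpow j),
      ENNReal.ofReal_toReal (hAfin _), mul_assoc]
    exact mul_le_mul_right (key j) _
  have hint : Integrable (fun s => |f s|) ρ1 :=
    Integrable.of_bound hfm.abs.aestronglyMeasurable C
      (Filter.Eventually.of_forall fun s => by simpa using hfb s)
  have hfin : ∫⁻ s, ENNReal.ofReal |f s| ∂ρ1 ≠ ⊤ := by
    rw [← ofReal_integral_eq_lintegral_ofReal hint
      (Filter.Eventually.of_forall fun s => abs_nonneg _)]
    exact ENNReal.ofReal_ne_top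
  unfold L1
  rw [integral_eq_lintegral_of_nonneg_ae (Filter.Eventually.of_forall fun s => abs_nonneg _)
      hfm.abs.aestronglyMeasurable,
    integral_eq_lintegral_of_nonneg_ae (Filter.Eventually.of_forall fun s => abs_nonneg _)
      hfm.abs.aestronglyMeasurable]
  refine (ENNReal.toReal_mono (ENNReal.mul_ne_top ENNReal.ofReal_ne_top hfin) hL).trans ?_
  rw [ENNReal.toReal_mul, ENNReal.toReal_ofReal (tsum_nonneg hnn)]
end
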